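/- For each n ≥ 1, the sum over all permutations σ ∈ S_n of q^{s(σ)}, where s(σ) = run(σ) − 1 + 2·lsg(σ) + rsg(σ), equals the q-factorial [n]_q!. -/

import Mathlib

/-!
Write `s(σ) = run(σ) - 1 + 2 lsg(σ) + rsg(σ)`. A run not containing `v` straddles `v` exactly when
one of its ascents `σ(j) < σ(j+1)` does, and that ascent is unique. Hence `s(σ)` is a sum over the
positions `j`: a descent contributes `1`, an ascent contributes twice the number of later letters
plus the number of earlier letters with value strictly between `σ(j)` and `σ(j+1)` (`stat_eq`).

Inserting a new maximal letter right after the `j`-th letter of a word of length `m` raises `s` by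
an explicit amount `w_j`, and the vector of these amounts evolves by itself: inserting after the
`g`-th letter turns `(w_1, …, w_m)` into `(w_1 + 2, …, w_{g-1} + 2, 3, 0, w_{g+1} + 1, …, w_m + 1)`,
while inserting in front of a nonempty word raises `s` by `1` and turns it into
`(0, w_1 + 1, …, w_m + 1)`.
Consider therefore `F_m(x) = ∑_σ q^{s(σ)} ∏_j (1 + x q^{w_j(σ)})`. The sum over the insertion
places telescopes (`tel_eq`) and gives, for `m ≥ 1`,
`F_{m+1}(x) = q (1 + x) F_m(qx) + (1 + x)(1 + q³x) (F_m(q²x) - F_m(qx)) / (x q (q - 1))`,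
which is `total_cons` with the denominator cleared. Induction yields the closed form
`F_m(x) = [m]_q! (1 + x) ∏_{i=2}^{m} (1 + q^i x)` (`total_eq`); taking `x` to be an indeterminate
allows the division by `x`, and `x = 0` is the theorem.
-/

open Finset

namespace SS

variable {n : ℕ}

/-- `descB σ j = true` iff there is a descent between positions `j` and `j+1`
in the word `σ(1)σ(2)⋯σ(n)`. -/
def descB (σ : Equiv.Perm (Fin n)) (j : ℕ) : Bool :=
  if h : j + 1 < n then decide ((σ ⟨j+1, h⟩) < σ ⟨j, Nat.lt_of_succ_lt h⟩) else false

/-- The index of the maximal increasing run containing position `p`. -/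
def runIdx (σ : Equiv.Perm (Fin n)) (p : ℕ) : ℕ :=
  ((Finset.range p).filter (fun j => descB σ j = true)).card

/-- The index of the run containing the value `v`. -/
def runOf (σ : Equiv.Perm (Fin n)) (v : Fin n) : ℕ := runIdx σ (σ.symm v).val

/-- The number of maximal increasing runs of `σ`. -/
def runCount (σ : Equiv.Perm (Fin n)) : ℕ :=
  if n = 0 then 0 else runIdx σ n + 1

/-- `lsgAt σ v` : number of runs strictly to the left of (the run of) `v`
containing both an element smaller than `v` and an element greater than `v`. -/
def lsgAt (σ : Equiv.Perm (Fin n)) (v : Fin n) : ℕ :=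
  ((Finset.range (runCount σ)).filter (fun r => r < runOf σ v ∧
      (∃ a : Fin n, runOf σ a = r ∧ a < v) ∧ (∃ b : Fin n, runOf σ b = r ∧ v < b))).card

/-- `rsgAt σ v` : number of runs strictly to the right of `v`
containing both an element smaller than `v` and an element greater than `v`. -/
def rsgAt (σ : Equiv.Perm (Fin n)) (v : Fin n) : ℕ :=
  ((Finset.range (runCount σ)).filter (fun r => runOf σ v < r ∧
      (∃ a : Fin n, runOf σ a = r ∧ a < v) ∧ (∃ b : Fin n, runOf σ b = r ∧ v < b))).card

def lsg (σ : Equiv.Perm (Fin n)) : ℕ := ∑ v : Fin n, lsgAt σ v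
def rsg (σ : Equiv.Perm (Fin n)) : ℕ := ∑ v : Fin n, rsgAt σ v

/-- position `p` begins a maximal increasing run. -/
def startsB (σ : Equiv.Perm (Fin n)) (p : ℕ) : Bool := p == 0 || descB σ (p - 1)

/-- position `p` ends a maximal increasing run. -/
def endsB (σ : Equiv.Perm (Fin n)) (p : ℕ) : Bool := p + 1 == n || descB σ p

def openerB (σ : Equiv.Perm (Fin n)) (v : Fin n) : Bool :=
  startsB σ (σ.symm v).val && !endsB σ (σ.symm v).val
def closerB (σ : Equiv.Perm (Fin n)) (v : Fin n) : Bool :=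
  endsB σ (σ.symm v).val && !startsB σ (σ.symm v).val
def singB (σ : Equiv.Perm (Fin n)) (v : Fin n) : Bool :=
  startsB σ (σ.symm v).val && endsB σ (σ.symm v).val
def contB (σ : Equiv.Perm (Fin n)) (v : Fin n) : Bool :=
  !startsB σ (σ.symm v).val && !endsB σ (σ.symm v).val

def lsgOp (σ : Equiv.Perm (Fin n)) : ℕ :=
  ∑ v ∈ univ.filter (fun v : Fin n => openerB σ v = true), lsgAt σ v
def rsgOp (σ : Equiv.Perm (Fin n)) : ℕ :=
  ∑ v ∈ univ.filter (fun v : Fin n => openerB σ v = true), rsgAt σ v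
def lsgClos (σ : Equiv.Perm (Fin n)) : ℕ :=
  ∑ v ∈ univ.filter (fun v : Fin n => closerB σ v = true), lsgAt σ v
def rsgClos (σ : Equiv.Perm (Fin n)) : ℕ :=
  ∑ v ∈ univ.filter (fun v : Fin n => closerB σ v = true), rsgAt σ v
def lsgSing (σ : Equiv.Perm (Fin n)) : ℕ :=
  ∑ v ∈ univ.filter (fun v : Fin n => singB σ v = true), lsgAt σ v
def rsgSing (σ : Equiv.Perm (Fin n)) : ℕ :=
  ∑ v ∈ univ.filter (fun v : Fin n => singB σ v = true), rsgAt σ v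
def lsgCont (σ : Equiv.Perm (Fin n)) : ℕ :=
  ∑ v ∈ univ.filter (fun v : Fin n => contB σ v = true), lsgAt σ v
def rsgCont (σ : Equiv.Perm (Fin n)) : ℕ :=
  ∑ v ∈ univ.filter (fun v : Fin n => contB σ v = true), rsgAt σ v

/-- `[m]_q = 1 + q + ⋯ + q^{m-1}`. -/
def qint {R : Type*} [CommRing R] (q : R) (m : ℕ) : R := ∑ i ∈ Finset.range m, q ^ i

/-- `[n]_q! = [1]_q [2]_q ⋯ [n]_q`. -/
def qfact {R : Type*} [CommRing R] (q : R) (n : ℕ) : R := ∏ m ∈ Finset.range n, qint q (m+1)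

/-- `moment b lam l h` : sum of the weights of all weighted Motzkin paths with `l` steps
starting at height `h` and ending at height `0`, where up steps have weight `1`,
a level step at height `k` has weight `b k`, and a down step from height `k`
has weight `lam k`.  The `n`th moment of the corresponding monic orthogonal
polynomial sequence is `moment b lam n 0`. -/
def moment {R : Type*} [CommRing R] (b lam : ℕ → R) : ℕ → ℕ → R
  | 0, h => if h = 0 then 1 else 0
  | (l+1), h => moment b lam l (h+1) + b h * moment b lam l h +
      (if h = 0 then 0 else lam h * moment b lam l (h-1))

end SS

namespace SS

/-! ### Words and insertion of a maximal letter -/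

/-- Number of letters of `l` with value strictly between `a` and `b`. -/
def cntBetween (a b : ℕ) (l : List ℕ) : ℕ := l.countP (fun c => a < c ∧ c < b)

/-- Number of letters of `l` greater than `a`. -/
def cntGT (a : ℕ) (l : List ℕ) : ℕ := l.countP (fun c => a < c)

/-- Number of letters of `l` at least `a`. -/
def cntGE (a : ℕ) (l : List ℕ) : ℕ := l.countP (fun c => a ≤ c)

/-- `wordStat l pre` is the part of the statistic `s` of the word `pre.reverse ++ l` that comes from
adjacent pairs inside `l`: a pair `a b` contributes `1` unless `a < b`, in which case it contributes
twice the number of letters to its right plus the number of letters to its left lying strictly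
between `a` and `b`. The letters to the left of `l` are carried in `pre`, whose order is irrelevant. -/
def wordStat : List ℕ → List ℕ → ℕ
  | a :: b :: t, pre =>
      (if a < b then 2 * cntBetween a b t + cntBetween a b pre else 1)
        + wordStat (b :: t) (a :: pre)
  | [_], _ => 0
  | [], _ => 0

/-- `gapHead a t pre` is the increase of the statistic when a new maximal letter is inserted right
after `a` in the word `pre.reverse ++ a :: t`. In the ascent case, `3` accounts for the new descent
(`1`) and for the letter `b`, which lies to the right of the new ascent (`2`); non-strict
counting (`cntGE`) makes the formula valid for words with repeated letters as well. -/
def gapHead (a : ℕ) : List ℕ → List ℕ → ℕ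
  | [], pre => cntGT a pre
  | b :: t, pre =>
      if a < b then 3 + cntGE b pre + 2 * cntGE b t else cntGT a pre + 2 * cntGT a t

/-- The vector of insertion increments `gapHead`, one for the gap after each letter of `l`, in the
word `pre.reverse ++ l`. -/
def gapWeights : List ℕ → List ℕ → List ℕ
  | [], _ => []
  | a :: t, pre => gapHead a t pre :: gapWeights t (a :: pre)

lemma cntBetween_max {a N : ℕ} {l : List ℕ} (h : ∀ c ∈ l, c < N) :
    cntBetween a N l = cntGT a l := by
  unfold cntBetween cntGT
  apply List.countP_congr
  intro c hc
  have := h c hc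
  simp [this]

lemma cntGT_split {a b : ℕ} (hab : a < b) (l : List ℕ) :
    cntGT a l = cntBetween a b l + cntGE b l := by
  unfold cntBetween cntGT cntGE
  induction l with
  | nil => simp
  | cons c l ih =>
    simp only [List.countP_cons, ih, decide_eq_true_eq]
    split_ifs <;> omega

lemma cntGE_max {N : ℕ} {l : List ℕ} (h : ∀ c ∈ l, c < N) : cntGE N l = 0 := by
  unfold cntGE
  rw [List.countP_eq_zero]
  intro c hc
  have := h c hc
  simp; omega

/-- A maximal letter to the left never lies between two letters of `l`. -/
lemma wordStat_pre (N : ℕ) (l : List ℕ) : ∀ pre pre' : List ℕ, pre'.Perm (N :: pre) →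
    (∀ c ∈ l, c < N) → wordStat l pre' = wordStat l pre := by
  induction l with
  | nil => intros; simp [wordStat]
  | cons a t ih =>
    intro pre pre' hp hl
    cases t with
    | nil => simp [wordStat]
    | cons b t =>
      have h1 := ih (a :: pre) (a :: pre') ((hp.cons a).trans (List.Perm.swap _ _ _))
        (fun c hc => hl c (List.mem_cons_of_mem _ hc))
      have hb : b < N := hl b (by simp)
      have h2 : cntBetween a b pre' = cntBetween a b pre := by
        unfold cntBetween
        rw [hp.countP_eq, List.countP_cons]
        simp; omega
      simp only [wordStat, h1, h2]

/-- A maximal letter to the left counts once in every insertion increment. -/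
lemma gapWeights_pre (N : ℕ) (l : List ℕ) : ∀ pre pre' : List ℕ, pre'.Perm (N :: pre) →
    (∀ c ∈ l, c < N) → gapWeights l pre' = (gapWeights l pre).map (· + 1) := by
  induction l with
  | nil => intros; simp [gapWeights]
  | cons a t ih =>
    intro pre pre' hp hl
    have h1 := ih (a :: pre) (a :: pre') ((hp.cons a).trans (List.Perm.swap _ _ _))
        (fun c hc => hl c (List.mem_cons_of_mem _ hc))
    have hG : ∀ c, c < N → cntGT c pre' = cntGT c pre + 1 := by
      intro c hc
      unfold cntGT
      rw [hp.countP_eq, List.countP_cons]; simp [hc]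
    have hE : ∀ c, c < N → cntGE c pre' = cntGE c pre + 1 := by
      intro c hc
      unfold cntGE
      rw [hp.countP_eq, List.countP_cons]; simp [hc.le]
    have ha : a < N := hl a (by simp)
    simp only [gapWeights, h1, List.map_cons, List.cons.injEq, and_true]
    cases t with
    | nil => simp [gapHead, hG a ha]
    | cons b t =>
      have hb : b < N := hl b (by simp)
      simp only [gapHead, hG a ha, hE b hb]
      split_ifs <;> omega

lemma wordStat_insert_head (N a : ℕ) (t pre : List ℕ) (ha : a < N) (ht : ∀ c ∈ t, c < N)
    (hp : ∀ c ∈ pre, c < N) :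
    wordStat (a :: N :: t) pre = wordStat (a :: t) pre + gapHead a t pre := by
  cases t with
  | nil =>
    have h0 : cntBetween a N [] = 0 := rfl
    simp [wordStat, gapHead, ha, cntBetween_max hp, h0]
  | cons b t =>
    have hb : b < N := ht b (by simp)
    have h1 := wordStat_pre N (b :: t) (a :: pre) (N :: a :: pre) (List.Perm.refl _) ht
    have hnb : ¬ N < b := by omega
    simp only [wordStat, gapHead, if_pos ha, if_neg hnb, h1, cntBetween_max hp,
      cntBetween_max ht]
    have h2 : cntGT a (b :: t) = cntGT a t + if a < b then 1 else 0 := by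
      simp [cntGT, List.countP_cons]
    rw [h2]
    split_ifs with hab
    · rw [cntGT_split hab t, cntGT_split hab pre]; omega
    · omega

lemma gapWeights_insert_head (N a : ℕ) (t pre : List ℕ) (ha : a < N) (ht : ∀ c ∈ t, c < N)
    (hp : ∀ c ∈ pre, c < N) :
    gapWeights (a :: N :: t) pre = 3 :: 0 :: (gapWeights t (a :: pre)).map (· + 1) := by
  have h1 := gapWeights_pre N t (a :: pre) (N :: a :: pre) (List.Perm.refl _) ht
  have hp' : ∀ c ∈ a :: pre, c < N := by simpa [ha] using hp
  have h0 : ∀ l : List ℕ, (∀ c ∈ l, c < N) → cntGT N l = 0 := by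
    intro l hl
    unfold cntGT
    rw [List.countP_eq_zero]
    intro c hc
    have := hl c hc
    simp; omega
  have h2 : gapHead N t (a :: pre) = 0 := by
    cases t with
    | nil => simp [gapHead, h0 _ hp']
    | cons b t =>
      have hb : ¬ N < b := by have := ht b (by simp); omega
      simp [gapHead, h0 _ hp', hb, h0 t (fun c hc => ht c (by simp [hc]))]
  have h3 : gapHead a (N :: t) pre = 3 := by
    simp [gapHead, ha, cntGE_max hp, cntGE_max ht]
  simp only [gapWeights, h1, h2, h3]

/-- A maximal letter to the right (but not adjacent) counts twice in an insertion increment. -/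
lemma gapHead_insert (N a b : ℕ) (t t' pre : List ℕ) (ha : a < N) (hb : b < N)
    (hp : t'.Perm (N :: t)) :
    gapHead a (b :: t') pre = gapHead a (b :: t) pre + 2 := by
  have hG : cntGT a t' = cntGT a t + 1 := by
    unfold cntGT
    rw [hp.countP_eq, List.countP_cons]; simp [ha]
  have hE : cntGE b t' = cntGE b t + 1 := by
    unfold cntGE
    rw [hp.countP_eq, List.countP_cons]; simp [hb.le]
  simp only [gapHead, hG, hE]
  split_ifs <;> omega

/-- The contribution `d` of the first pair `a b` is unaffected by inserting a maximal letter `N`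
somewhere after `b`. -/
lemma wordStat_cons (N a b : ℕ) (t pre : List ℕ) (hb : b < N) :
    ∃ d, wordStat (a :: b :: t) pre = d + wordStat (b :: t) (a :: pre) ∧
      ∀ t' : List ℕ, t'.Perm (N :: t) →
        wordStat (a :: b :: t') pre = d + wordStat (b :: t') (a :: pre) := by
  refine ⟨_, rfl, fun t' hp => ?_⟩
  have h2 : cntBetween a b t' = cntBetween a b t := by
    unfold cntBetween
    rw [hp.countP_eq, List.countP_cons]
    simp; omega
  simp only [wordStat, h2]

/-! ### The generating function over words -/

section Sums
variable {K : Type*} [CommRing K]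

/-- The contribution `q^s ∏_j (1 + x q^{w_j})` of a word to the generating function. -/
def wordWeight (q x : K) (l pre : List ℕ) : K :=
  q ^ wordStat l pre * ((gapWeights l pre).map (fun w => 1 + x * q ^ w)).prod

/-- `∑_g q^{w_g} ∏_{j<g} (1 + x q² q^{w_j}) ∏_{j>g} (1 + x q q^{w_j})` for the list of the `w_j`. -/
def tel (q x : K) : List ℕ → K
  | [] => 0
  | w :: ws => q ^ w * (ws.map (fun v => 1 + x * q * q ^ v)).prod
      + (1 + x * q ^ 2 * q ^ w) * tel q x ws

/-- The sum `tel` telescopes, since `(1 + x q² q^w) - (1 + x q q^w) = x q (q - 1) q^w`. -/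
lemma tel_eq (q x : K) (ws : List ℕ) :
    x * q * (q - 1) * tel q x ws = (ws.map (fun v => 1 + x * q ^ 2 * q ^ v)).prod
      - (ws.map (fun v => 1 + x * q * q ^ v)).prod := by
  induction ws with
  | nil => simp [tel]
  | cons w ws ih =>
    simp only [tel, List.map_cons, List.prod_cons]
    linear_combination (1 + x * q ^ 2 * q ^ w) * ih

/-- All words obtained by inserting `N` into a word anywhere but in front. -/
def insAfter (N : ℕ) : List ℕ → List (List ℕ)
  | [] => []
  | a :: t => (a :: N :: t) :: (insAfter N t).map (List.cons a)

lemma permutations'Aux_eq (N : ℕ) (l : List ℕ) :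
    List.permutations'Aux N l = (N :: l) :: insAfter N l := by
  induction l with
  | nil => simp [insAfter]
  | cons a t ih => simp [insAfter, ih]

lemma insAfter_form (N b : ℕ) (t l : List ℕ) (h : l ∈ insAfter N (b :: t)) :
    ∃ t', l = b :: t' ∧ t'.Perm (N :: t) := by
  simp only [insAfter, List.mem_cons, List.mem_map] at h
  rcases h with rfl | ⟨t', ht', rfl⟩
  · exact ⟨_, rfl, List.Perm.refl _⟩
  · refine ⟨t', rfl, ?_⟩
    have : t' ∈ List.permutations'Aux N t := by
      rw [permutations'Aux_eq]; exact List.mem_cons_of_mem _ ht'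
    have h2 : t' ∈ List.permutations' (N :: t) := by
      rw [List.permutations', List.mem_flatMap]
      exact ⟨t, List.mem_permutations'.2 (List.Perm.refl _), this⟩
    exact List.mem_permutations'.1 h2

lemma sum_insAfter (q x : K) (N : ℕ) (l : List ℕ) : ∀ pre : List ℕ,
    (∀ c ∈ l, c < N) → (∀ c ∈ pre, c < N) →
    ((insAfter N l).map (fun l' => wordWeight q x l' pre)).sum
      = q ^ wordStat l pre * ((1 + x) * (1 + q ^ 3 * x)) * tel q x (gapWeights l pre) := by
  induction l with
  | nil => intros; simp [insAfter, gapWeights, tel]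
  | cons a t ih =>
    intro pre hl hp
    have ha : a < N := hl a (by simp)
    have ht : ∀ c ∈ t, c < N := fun c hc => hl c (by simp [hc])
    have hp' : ∀ c ∈ a :: pre, c < N := by simpa [ha] using hp
    have hI := ih (a :: pre) ht hp'
    have hhead : wordWeight q x (a :: N :: t) pre =
        q ^ wordStat (a :: t) pre * ((1 + x) * (1 + q ^ 3 * x)) *
          (q ^ gapHead a t pre *
            ((gapWeights t (a :: pre)).map (fun v => 1 + x * q * q ^ v)).prod) := by
      unfold wordWeight
      rw [wordStat_insert_head N a t pre ha ht hp, gapWeights_insert_head N a t pre ha ht hp]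
      have : ((fun w : ℕ => 1 + x * q ^ w) ∘ fun w => w + 1)
          = fun v => 1 + x * q * q ^ v := by
        funext v; simp [pow_succ]; ring
      simp only [List.map_cons, List.prod_cons, List.map_map, this, pow_add]
      ring
    simp only [insAfter, List.map_cons, List.sum_cons, List.map_map, gapWeights, tel, hhead]
    cases t with
    | nil => simp [insAfter, gapWeights, tel]
    | cons b t =>
      obtain ⟨d, hd, hd'⟩ := wordStat_cons N a b t pre (ht b (by simp))
      have htail : ((insAfter N (b :: t)).map
            ((fun l' => wordWeight q x l' pre) ∘ List.cons a)).sum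
          = q ^ d * (1 + x * q ^ 2 * q ^ gapHead a (b :: t) pre) *
            ((insAfter N (b :: t)).map (fun l' => wordWeight q x l' (a :: pre))).sum := by
        rw [← List.sum_map_mul_left]
        congr 1
        apply List.map_congr_left
        intro l hl
        obtain ⟨t', rfl, hp⟩ := insAfter_form N b t l hl
        have hg := gapHead_insert N a b t t' pre ha (ht b (by simp)) hp
        have e : gapWeights (a :: b :: t') pre
            = gapHead a (b :: t') pre :: gapWeights (b :: t') (a :: pre) := rfl
        simp only [Function.comp, wordWeight, hd' t' hp, e, hg, List.map_cons, List.prod_cons,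
          pow_add]
        ring
      rw [htail, hI, hd, pow_add]
      ring

/-- The generating function: total weight of all rearrangements of `l`. For distinct letters this is
`F_m(x)` with `m = l.length`. -/
def total (q x : K) (l : List ℕ) : K :=
  ((List.permutations' l).map (fun w => wordWeight q x w [])).sum

/-- The `q`-difference recursion obtained by inserting a new maximal letter in all possible ways. -/
lemma total_cons (q x : K) (N : ℕ) (l : List ℕ) (hne : l ≠ []) (hl : ∀ c ∈ l, c < N) :
    x * q * (q - 1) * total q x (N :: l)
      = x * q * (q - 1) * (q * (1 + x) * total q (x * q) l)
        + (1 + x) * (1 + q ^ 3 * x) * (total q (x * q ^ 2) l - total q (x * q) l) := by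
  have key : ∀ w ∈ List.permutations' l,
      x * q * (q - 1) * ((List.permutations'Aux N w).map (fun w => wordWeight q x w [])).sum
      = x * q * (q - 1) * (q * (1 + x) * wordWeight q (x * q) w [])
        + (1 + x) * (1 + q ^ 3 * x) *
          (wordWeight q (x * q ^ 2) w [] - wordWeight q (x * q) w []) := by
    intro w hw
    have hperm := List.mem_permutations'.1 hw
    have hwN : ∀ c ∈ w, c < N := fun c hc => hl c (hperm.mem_iff.1 hc)
    have htel := tel_eq q x (gapWeights w [])
    rw [permutations'Aux_eq, List.map_cons, List.sum_cons,
      sum_insAfter q x N w [] hwN (by simp)]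
    have hfront : wordWeight q x (N :: w) [] = q * (1 + x) * wordWeight q (x * q) w [] := by
      cases w with
      | nil => exact absurd (List.nil_perm.1 hperm) hne
      | cons a t =>
        have ha := hwN a (by simp)
        have h1 : wordStat (N :: a :: t) [] = 1 + wordStat (a :: t) [] := by
          rw [← wordStat_pre N (a :: t) [] [N] (List.Perm.refl _) hwN]
          simp [wordStat, ha.le]
        have h2 : gapWeights (N :: a :: t) [] = 0 :: (gapWeights (a :: t) []).map (· + 1) := by
          rw [← gapWeights_pre N (a :: t) [] [N] (List.Perm.refl _) hwN]
          have h3 : cntGT N t = 0 := by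
            unfold cntGT
            rw [List.countP_eq_zero]
            intro c hc
            have := hwN c (by simp [hc])
            simp; omega
          have : gapHead N (a :: t) [] = 0 := by
            have h4 : cntGT N [] = 0 := rfl
            simp [gapHead, h3, ha.not_gt, h4]
          rw [gapWeights, this]
        have : ((fun w : ℕ => 1 + x * q ^ w) ∘ fun w => w + 1)
            = fun v => 1 + x * q * q ^ v := by
          funext v; simp [pow_succ]; ring
        simp only [wordWeight, h1, h2, List.map_cons, List.prod_cons, List.map_map, this, pow_add]
        ring
    rw [hfront]
    unfold wordWeight
    linear_combination (q ^ wordStat w [] * ((1 + x) * (1 + q ^ 3 * x))) * htel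
  unfold total
  rw [List.permutations']
  generalize List.permutations' l = L at key ⊢
  induction L with
  | nil => simp
  | cons w L ih =>
    have h1 := key w (by simp)
    have h2 := ih fun v hv => key v (by simp [hv])
    simp only [List.flatMap_cons, List.map_append, List.sum_append, List.map_cons, List.sum_cons]
    linear_combination h1 + h2

/-- `∏_{i=2}^{k+1} (1 + q^i x)`. -/
def closed (q x : K) (k : ℕ) : K := ∏ i ∈ range k, (1 + q ^ (i + 2) * x)

/-- The closed form satisfies the recursion of `total_cons`. -/
lemma closed_step (q x : K) (k : ℕ) :
    x * q * (q - 1) * (q * (1 + x) * ((1 + x * q) * closed q (x * q) k))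
      + (1 + x) * (1 + q ^ 3 * x) * ((1 + x * q ^ 2) * closed q (x * q ^ 2) k
          - (1 + x * q) * closed q (x * q) k)
    = x * q * (q - 1) * (qint q (k + 2) * ((1 + x) * closed q x (k + 1))) := by
  have h1 : closed q x (k + 1) = (1 + q ^ 2 * x) * closed q (x * q) k := by
    unfold closed
    rw [prod_range_succ', mul_comm]
    congr 1
    apply prod_congr rfl
    intros; ring
  have h2 : (1 + q ^ 3 * x) * closed q (x * q ^ 2) k
      = (1 + q ^ (k + 3) * x) * closed q (x * q) k := by
    have e1 : closed q (x * q) (k + 1) = (1 + q ^ 3 * x) * closed q (x * q ^ 2) k := by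
      unfold closed
      rw [prod_range_succ', mul_comm]
      congr 1
      · ring
      · apply prod_congr rfl
        intros; ring
    rw [← e1]
    unfold closed
    rw [prod_range_succ]
    ring
  have h3 : qint q (k + 2) * (q - 1) = q ^ (k + 2) - 1 := geom_sum_mul q (k + 2)
  rw [h1]
  linear_combination (1 + x) * (1 + x * q ^ 2) * h2
    - x * q * (1 + x) * (1 + q ^ 2 * x) * closed q (x * q) k * h3

lemma total_eq [IsDomain K] (q : K) (hq : q ≠ 0) (hq1 : q ≠ 1) (k : ℕ) : ∀ x : K, x ≠ 0 →
    total q x (List.range (k + 1)).reverse = qfact q (k + 1) * ((1 + x) * closed q x k) := by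
  induction k with
  | zero =>
    intro x _
    simp [total, wordWeight, wordStat, gapWeights, gapHead, closed, qfact, qint, cntGT]
  | succ k ih =>
    intro x hx
    have hne : x * q * (q - 1) ≠ 0 := mul_ne_zero (mul_ne_zero hx hq) (sub_ne_zero.2 hq1)
    apply mul_left_cancel₀ hne
    rw [List.range_succ, List.reverse_append, List.reverse_singleton, List.singleton_append,
      total_cons q x (k + 1) _ (by simp) (by simp),
      ih (x * q) (mul_ne_zero hx hq), ih (x * q ^ 2) (mul_ne_zero hx (pow_ne_zero 2 hq))]
    have h := closed_step q x k
    have hf : qfact q (k + 1 + 1) = qfact q (k + 1) * qint q (k + 2) := by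
      unfold qfact; rw [prod_range_succ]
    rw [hf]
    linear_combination qfact q (k + 1) * h
end Sums

open Polynomial in
/-- The closed form over `ℤ[q][x]`, specialised at `x = 0`. -/
lemma sum_words (k : ℕ) :
    ((List.permutations' (List.range (k + 1)).reverse).map
      (fun w => (X : ℤ[X]) ^ wordStat w [])).sum = qfact (X : ℤ[X]) (k + 1) := by
  have h := total_eq (C (X : ℤ[X]) : ℤ[X][X]) (by simp) 
    (by
      rw [← C_1]
      intro h
      have := congrArg (eval 0) (C_injective h)
      simp at this) k X X_ne_zero
  have h2 := congrArg (evalRingHom (0 : ℤ[X])) h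
  have h3 : ∀ ws : List ℕ,
      eval 0 (ws.map (fun w => 1 + (X : ℤ[X][X]) * C (X : ℤ[X]) ^ w)).prod = 1 := by
    intro ws
    induction ws with
    | nil => simp
    | cons w ws ih => simp [ih]
  simp only [total, wordWeight, closed, qfact, qint, map_list_sum, List.map_map, map_mul,
    map_prod, map_sum, map_pow, map_add] at h2
  simp [Function.comp_def, h3] at h2
  simpa [qfact, qint] using h2

/-! ### Straddling runs and ascents -/

/-- The letter of `σ` at position `p` as a natural number, with value `0` for `p ≥ n`. -/
def letter {n : ℕ} (σ : Equiv.Perm (Fin n)) (p : ℕ) : ℕ := if h : p < n then σ ⟨p, h⟩ else 0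

lemma cntBetween_range' (f : ℕ → ℕ) (a b s m : ℕ) :
    cntBetween a b ((List.range' s m).map f)
      = ((Ico s (s + m)).filter (fun p => a < f p ∧ f p < b)).card := by
  unfold cntBetween
  induction m generalizing s with
  | zero => simp
  | succ m ih =>
    have hI : Ico s (s + (m + 1)) = insert s (Ico (s + 1) (s + 1 + m)) := by
      ext x; simp; omega
    rw [List.range'_succ, List.map_cons, List.countP_cons, ih, hI, filter_insert]
    by_cases h : a < f s ∧ f s < b
    · rw [if_pos h, card_insert_of_notMem (by simp)]
      simp [h]
    · rw [if_neg h]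
      simp [h]

/-- `wordStat` as a sum over positions: `pre` stands for the letters at positions below `s`. -/
lemma wordStat_range' (f : ℕ → ℕ) (m : ℕ) : ∀ (s : ℕ) (pre : List ℕ),
    (∀ a b, cntBetween a b pre = ((range s).filter (fun p => a < f p ∧ f p < b)).card) →
    wordStat ((List.range' s (m + 1)).map f) pre
      = ∑ j ∈ Ico s (s + m), (if f j < f (j + 1) then
          2 * ((Ico (j + 2) (s + m + 1)).filter (fun p => f j < f p ∧ f p < f (j + 1))).card
            + ((range j).filter (fun p => f j < f p ∧ f p < f (j + 1))).card
        else 1) := by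
  induction m with
  | zero => intros; simp [wordStat]
  | succ m ih =>
    intro s pre hpre
    have hpre' : ∀ a b, cntBetween a b (f s :: pre)
        = ((range (s + 1)).filter (fun p => a < f p ∧ f p < b)).card := by
      intro a b
      have e : cntBetween a b (f s :: pre)
          = cntBetween a b pre + if a < f s ∧ f s < b then 1 else 0 := by
        simp [cntBetween, List.countP_cons]
      rw [e, hpre, range_add_one, filter_insert]
      split_ifs with h
      · rw [card_insert_of_notMem (by simp)]
      · rfl
    have h1 := ih (s + 1) (f s :: pre) hpre'
    rw [List.range'_succ, List.range'_succ, List.map_cons, List.map_cons, wordStat,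
      ← List.map_cons, ← List.range'_succ, h1, cntBetween_range', hpre,
      sum_eq_sum_Ico_succ_bot (show s < s + (m + 1) by omega)]
    have e1 : s + 1 + m = s + (m + 1) := by omega
    have e2 : s + 1 + 1 + m = s + (m + 1) + 1 := by omega
    rw [e1, e2]

section Perm
variable {n : ℕ} (σ : Equiv.Perm (Fin n))

lemma letter_of_lt {p : ℕ} (h : p < n) : letter σ p = σ ⟨p, h⟩ := by simp [letter, h]

lemma letter_inj {p p' : ℕ} (h : p < n) (h' : p' < n) (e : letter σ p = letter σ p') :
    p = p' := by
  rw [letter_of_lt σ h, letter_of_lt σ h'] at e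
  simpa using σ.injective (Fin.ext e)

lemma descB_iff {j : ℕ} (h : j + 1 < n) : descB σ j = true ↔ letter σ (j + 1) < letter σ j := by
  rw [letter_of_lt σ h, letter_of_lt σ (by omega : j < n)]
  simp [descB, h]

lemma runIdx_mono {p p' : ℕ} (h : p ≤ p') : runIdx σ p ≤ runIdx σ p' := by
  unfold runIdx
  apply card_le_card
  apply filter_subset_filter
  simpa using h

lemma runIdx_succ (p : ℕ) : runIdx σ (p + 1) = runIdx σ p + if descB σ p then 1 else 0 := by
  unfold runIdx
  rw [range_add_one, filter_insert]
  split_ifs with h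
  · rw [card_insert_of_notMem (by simp)]
  · rfl

lemma letter_lt_of_run {p p' : ℕ} (h : p < p') (hn : p' < n) (hr : runIdx σ p = runIdx σ p') :
    letter σ p < letter σ p' := by
  induction p', (show p + 1 ≤ p' from h) using Nat.le_induction with
  | base =>
    rw [runIdx_succ] at hr
    have : ¬ descB σ p = true := by
      intro h; simp [h] at hr
    rw [descB_iff σ hn] at this
    have hne : letter σ p ≠ letter σ (p + 1) := fun e => by
      have := letter_inj σ (by omega) hn e
      omega
    omega
  | succ k hk ih =>
    have m1 := runIdx_mono σ (show p ≤ k by omega)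
    have m2 := runIdx_mono σ (show k ≤ k + 1 by omega)
    have := ih (by omega) (by omega) (by omega)
    rw [runIdx_succ] at hr m2
    have : ¬ descB σ k = true := by
      intro h; simp [h] at hr; omega
    rw [descB_iff σ hn] at this
    have hne : letter σ k ≠ letter σ (k + 1) := fun e => by
      have := letter_inj σ (by omega) hn e
      omega
    omega

/-- The pair at positions `j`, `j + 1` is an ascent straddling the letter at position `p`. -/
def Crosses (p j : ℕ) : Prop := letter σ j < letter σ p ∧ letter σ p < letter σ (j + 1)

instance (p j : ℕ) : Decidable (Crosses σ p j) := by unfold Crosses; infer_instance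

lemma Crosses.runIdx_eq {σ : Equiv.Perm (Fin n)} {p j : ℕ} (h : Crosses σ p j)
    (hj : j + 1 < n) : runIdx σ (j + 1) = runIdx σ j := by
  have : ¬ descB σ j = true := by
    rw [descB_iff σ hj]; have := h.1; have := h.2; omega
  simp [runIdx_succ, this]

lemma Crosses.lt_left {σ : Equiv.Perm (Fin n)} {p j : ℕ} (h : Crosses σ p j)
    (hp : p < n) (hj : j + 1 < n) : runIdx σ j < runIdx σ p ↔ j + 1 < p := by
  have e := h.runIdx_eq hj
  constructor
  · intro hr
    by_contra hc
    have := runIdx_mono σ (show p ≤ j + 1 by omega)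
    omega
  · intro hjp
    have := runIdx_mono σ hjp.le
    by_contra hc
    have := letter_lt_of_run σ hjp hp (by omega)
    have := h.2
    omega

lemma Crosses.lt_right {σ : Equiv.Perm (Fin n)} {p j : ℕ} (h : Crosses σ p j)
    (hj : j + 1 < n) : runIdx σ p < runIdx σ j ↔ p < j := by
  constructor
  · intro hr
    by_contra hc
    have := runIdx_mono σ (show j ≤ p by omega)
    omega
  · intro hjp
    have := runIdx_mono σ hjp.le
    by_contra hc
    have := letter_lt_of_run σ hjp (by omega) (by omega)
    have := h.1
    omega

/-- A run with a letter below and a letter above the letter at `p`, and not containing the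
latter, has an ascent straddling it: the first step that climbs above it. -/
lemma exists_crosses {p pa pb : ℕ} (hb : pb < n) (ha : pa < n) (hp : p < n)
    (hr : runIdx σ pa = runIdx σ pb) (hne : runIdx σ p ≠ runIdx σ pa)
    (h1 : letter σ pa < letter σ p) (h2 : letter σ p < letter σ pb) :
    ∃ j, j + 1 < n ∧ runIdx σ j = runIdx σ pa ∧ Crosses σ p j := by
  have hab : pa < pb := by
    rcases lt_trichotomy pa pb with h | h | h
    · exact h
    · subst h; omega
    · have := letter_lt_of_run σ h ha hr.symm
      omega
  -- the first position at or after `pa` whose successor exceeds the letter at `p`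
  have hex : ∃ j, pa ≤ j ∧ letter σ p < letter σ (j + 1) :=
    ⟨pb - 1, by omega, by rwa [Nat.sub_add_cancel (by omega)]⟩
  classical
  obtain ⟨hj1, hj2⟩ := Nat.find_spec hex
  have hmin := fun m => Nat.find_min hex (m := m)
  have hle : Nat.find hex ≤ pb - 1 :=
    Nat.find_min' hex ⟨by omega, by rwa [Nat.sub_add_cancel (by omega)]⟩
  generalize Nat.find hex = j at hj1 hj2 hmin hle
  have hrj : runIdx σ j = runIdx σ pa := by
    have := runIdx_mono σ hj1
    have := runIdx_mono σ (show j ≤ pb by omega)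
    omega
  refine ⟨j, by omega, hrj, ?_, hj2⟩
  rcases Nat.eq_or_lt_of_le hj1 with rfl | hlt
  · exact h1
  · have h3 := hmin (j - 1) (by omega)
    rw [Nat.sub_add_cancel (by omega)] at h3
    have h4 : letter σ j ≠ letter σ p := fun e => by
      have := letter_inj σ (by omega) hp e
      subst this
      exact hne hrj
    have : ¬ letter σ p < letter σ j := fun h => h3 ⟨by omega, h⟩
    omega

/-- Runs straddling `v` correspond to ascents straddling `v`, through the run of the ascent. The
conditions `C` and `D` select the side of `v`, in terms of runs and of positions respectively. -/
lemma card_straddle (v : Fin n) (C D : ℕ → Prop) [DecidablePred C] [DecidablePred D]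
    (hC : ∀ r, C r → r ≠ runOf σ v)
    (hCD : ∀ j, j + 1 < n → Crosses σ (σ.symm v) j → (C (runIdx σ j) ↔ D j)) :
    ((range (runCount σ)).filter (fun r => C r ∧
      (∃ a : Fin n, runOf σ a = r ∧ a < v) ∧ (∃ b : Fin n, runOf σ b = r ∧ v < b))).card
    = ((range (n - 1)).filter (fun j => D j ∧ Crosses σ (σ.symm v) j)).card := by
  symm
  have hL : ∀ a : Fin n, letter σ (σ.symm a) = a := fun a => by
    rw [letter_of_lt σ (σ.symm a).2]; simp
  apply card_bij (fun j _ => runIdx σ j)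
  · intro j hj
    simp only [mem_filter, mem_range] at hj ⊢
    obtain ⟨hjn, hD, hX⟩ := hj
    have hj1 : j + 1 < n := by omega
    have hX' := hX
    obtain ⟨hx1, hx2⟩ := hX
    rw [hL] at hx1 hx2
    refine ⟨?_, (hCD j hj1 hX').2 hD, ⟨σ ⟨j, by omega⟩, ?_, ?_⟩, ⟨σ ⟨j + 1, hj1⟩, ?_, ?_⟩⟩
    · have := runIdx_mono σ (show j ≤ n by omega)
      rw [runCount, if_neg (by omega)]
      omega
    · simp [runOf]
    · rwa [letter_of_lt σ (by omega)] at hx1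
    · simp [runOf, hX'.runIdx_eq hj1]
    · rwa [letter_of_lt σ hj1] at hx2
  · have aux : ∀ j j' : ℕ, j' + 1 < n → Crosses σ (σ.symm v) j → Crosses σ (σ.symm v) j' →
        runIdx σ j = runIdx σ j' → ¬ j < j' := by
      intro j j' hj' hX hX' hr hlt
      have h1 := hX.2
      have h2 := hX'.1
      rcases Nat.eq_or_lt_of_le (show j + 1 ≤ j' from hlt) with h | h
      · rw [← h] at h2; omega
      · have := letter_lt_of_run σ h (by omega)
          (by rw [hX.runIdx_eq (by omega)]; exact hr)
        omega
    intro j hj j' hj' hr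
    simp only [mem_filter, mem_range] at hj hj'
    have := aux j j' (by omega) hj.2.2 hj'.2.2 hr
    have := aux j' j (by omega) hj'.2.2 hj.2.2 hr.symm
    omega
  · intro r hr
    simp only [mem_filter, mem_range] at hr
    obtain ⟨-, hCr, ⟨a, ha, hav⟩, ⟨b, hb, hvb⟩⟩ := hr
    obtain ⟨j, hj, hjr, hX⟩ := exists_crosses σ (p := σ.symm v) (σ.symm b).2 (σ.symm a).2
      (σ.symm v).2 (ha.trans hb.symm) (fun e => hC r hCr (by rw [← ha]; exact e.symm))
      (by rw [hL, hL]; exact hav) (by rw [hL, hL]; exact hvb)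
    have hjr' : runIdx σ j = r := hjr.trans ha
    refine ⟨j, ?_, hjr'⟩
    simp only [mem_filter, mem_range]
    exact ⟨by omega, (hCD j hj hX).1 (hjr' ▸ hCr), hX⟩

/-- Double counting of pairs (straddled letter, straddling ascent). -/
lemma sum_straddle (D : ℕ → ℕ → Prop) [∀ p, DecidablePred (D p)] :
    ∑ v : Fin n, ((range (n - 1)).filter
        (fun j => D (σ.symm v) j ∧ Crosses σ (σ.symm v) j)).card
      = ∑ j ∈ range (n - 1), ((range n).filter (fun p => D p j ∧ Crosses σ p j)).card := by
  rw [Equiv.sum_comp σ.symm (fun p : Fin n => ((range (n - 1)).filter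
        (fun j => D p j ∧ Crosses σ p j)).card),
    Fin.sum_univ_eq_sum_range (fun p => ((range (n - 1)).filter
        (fun j => D p j ∧ Crosses σ p j)).card)]
  simp only [card_filter]
  exact sum_comm

lemma lsg_eq : lsg σ = ∑ j ∈ range (n - 1),
    ((range n).filter (fun p => j + 1 < p ∧ Crosses σ p j)).card := by
  rw [← sum_straddle σ (fun p j => j + 1 < p)]
  unfold lsg lsgAt
  refine sum_congr rfl fun v _ => ?_
  exact card_straddle σ v (fun r => r < runOf σ v) (fun j => j + 1 < (σ.symm v : ℕ))
    (fun r h => h.ne) (fun j hj hX => hX.lt_left (σ.symm v).2 hj)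

lemma rsg_eq : rsg σ = ∑ j ∈ range (n - 1),
    ((range n).filter (fun p => p < j ∧ Crosses σ p j)).card := by
  rw [← sum_straddle σ (fun p j => p < j)]
  unfold rsg rsgAt
  refine sum_congr rfl fun v _ => ?_
  exact card_straddle σ v (fun r => runOf σ v < r) (fun j => (σ.symm v : ℕ) < j)
    (fun r h => h.ne') (fun j hj hX => hX.lt_right hj)

lemma runCount_eq (hn : 1 ≤ n) : runCount σ - 1 =
    ∑ j ∈ range (n - 1), if letter σ j < letter σ (j + 1) then 0 else 1 := by
  obtain ⟨m, rfl⟩ : ∃ m, n = m + 1 := ⟨n - 1, by omega⟩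
  rw [runCount, if_neg (by omega), Nat.add_sub_cancel, runIdx_succ,
    if_neg (by simp [descB]), Nat.add_zero, runIdx, card_filter]
  refine sum_congr rfl fun j hj => ?_
  have hj1 : j + 1 < m + 1 := by simpa using hj
  have hne : letter σ j ≠ letter σ (j + 1) := fun e => by
    have := letter_inj σ (by omega) hj1 e
    omega
  have hd := descB_iff σ hj1
  split_ifs <;> simp_all <;> omega

/-- The statistic of the permutation is the word statistic of its one-line notation. -/
lemma stat_eq (hn : 1 ≤ n) : runCount σ - 1 + 2 * lsg σ + rsg σ
    = wordStat (List.ofFn fun i => (σ i : ℕ)) [] := by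
  have hw : (List.ofFn fun i => (σ i : ℕ)) = (List.range' 0 n).map (letter σ) := by
    rw [← List.range_eq_range']
    apply List.ext_getElem
    · simp
    · intro i h1 h2
      simp at h1
      simp [letter, h1]
  obtain ⟨m, hm⟩ : ∃ m, n = m + 1 := ⟨n - 1, by omega⟩
  have h := wordStat_range' (letter σ) m 0 [] (by simp [cntBetween])
  rw [← hm] at h
  rw [hw, h, runCount_eq σ hn, lsg_eq, rsg_eq, mul_sum, ← sum_add_distrib, ← sum_add_distrib]
  have e1 : n - 1 = m := by omega
  rw [e1, zero_add, ← range_eq_Ico]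
  refine sum_congr rfl fun j hj => ?_
  have hj := mem_range.1 hj
  have hl : (range n).filter (fun p => j + 1 < p ∧ Crosses σ p j)
      = (Ico (j + 2) (m + 1)).filter
          (fun p => letter σ j < letter σ p ∧ letter σ p < letter σ (j + 1)) := by
    ext p
    rw [mem_filter, mem_filter]
    simp only [mem_range, mem_Ico, Crosses]
    omega
  have hr : (range n).filter (fun p => p < j ∧ Crosses σ p j)
      = (range j).filter
          (fun p => letter σ j < letter σ p ∧ letter σ p < letter σ (j + 1)) := by
    ext p
    rw [mem_filter, mem_filter]
    simp only [mem_range, Crosses]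
    omega
  rw [hl, hr]
  split_ifs with hlt
  · omega
  · have h0 : ∀ s : Finset ℕ, s.filter
        (fun p => letter σ j < letter σ p ∧ letter σ p < letter σ (j + 1)) = ∅ := by
      intro s
      rw [filter_eq_empty_iff]
      intro p _
      omega
    simp [h0]

end Perm

/-! ### Permutations as words -/

lemma sum_perm_eq {M : Type*} [AddCommMonoid M] (n : ℕ) (F : List ℕ → M) :
    ∑ σ : Equiv.Perm (Fin n), F (List.ofFn fun i => (σ i : ℕ))
      = ((List.permutations' (List.range n).reverse).map F).sum := by
  have hnd : (List.permutations' (List.range n).reverse).Nodup :=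
    (List.permutations_perm_permutations' _).nodup_iff.1
      (List.nodup_permutations _ (by simpa using List.nodup_range))
  have hinj : Function.Injective
      (fun σ : Equiv.Perm (Fin n) => List.ofFn fun i => (σ i : ℕ)) := by
    intro σ τ h
    have := List.ofFn_injective h
    ext i
    exact congrFun this i
  have himg : (univ : Finset (Equiv.Perm (Fin n))).image
        (fun σ => List.ofFn fun i => (σ i : ℕ))
      = (List.permutations' (List.range n).reverse).toFinset := by
    apply eq_of_subset_of_card_le
    · intro w hw
      simp only [mem_image, mem_univ, true_and] at hw
      obtain ⟨σ, rfl⟩ := hw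
      rw [List.mem_toFinset, List.mem_permutations']
      have hN : (List.ofFn fun i => (σ i : ℕ)).Nodup :=
        List.nodup_ofFn.2 (fun i j h => σ.injective (Fin.ext h))
      rw [List.perm_ext_iff_of_nodup hN (by simpa using List.nodup_range)]
      intro c
      simp only [List.mem_ofFn, List.mem_reverse, List.mem_range]
      constructor
      · rintro ⟨i, rfl⟩; exact (σ i).2
      · intro hc; exact ⟨σ.symm ⟨c, hc⟩, by simp⟩
    · rw [card_image_of_injective _ hinj, List.toFinset_card_of_nodup hnd,
        (List.permutations_perm_permutations' _).symm.length_eq, List.length_permutations]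
      simp [Fintype.card_perm]
  rw [← List.sum_toFinset _ hnd, ← himg, sum_image (fun _ _ _ _ h => hinj h)]

end SS

open SS in
/-- `∑_{σ ∈ S_n} q^{run(σ) - 1 + 2 lsg(σ) + rsg(σ)} = [n]_q!` as polynomials in `q`. -/
theorem stmt3 (n : ℕ) (hn : 1 ≤ n) :
    ∑ σ : Equiv.Perm (Fin n),
        (Polynomial.X : Polynomial ℤ) ^ (runCount σ - 1 + 2 * lsg σ + rsg σ)
      = qfact (Polynomial.X : Polynomial ℤ) n := by
  obtain ⟨k, rfl⟩ : ∃ k, n = k + 1 := ⟨n - 1, by omega⟩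
  rw [← sum_words, ← sum_perm_eq]
  exact sum_congr rfl fun σ _ => by rw [stat_eq σ hn]
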